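/- Suppose G ∈ C_1 ⊕ C_2 where C_1 and C_2 are vertex-disjoint alternating cycles of lengths 2n and 2m regarded as 2-edge-colored graphs, and G has no good pair. If two parallel classes intersect, i.e., P_{uv} ∩ P_{wz} ≠ ∅ for exterior edges uv and wz, then P_{uv} = P_{wz}; consequently the set of parallel classes {P_{uv} : uv ∈ E_⊕} is a partition of the set E_⊕ of exterior edges of G. -/

import Mathlib

/-- An alternating cycle of length `N` in the 2-edge-colored graph `(G, c)`
(colors: `true` = red, `false` = blue). -/
def IsAltCycle {V : Type*} (G : SimpleGraph V) (c : Sym2 V → Bool) {N : ℕ}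
    (x : ZMod N → V) : Prop :=
  Function.Injective x ∧ (∀ i, G.Adj (x i) (x (i + 1))) ∧
    ∀ i, c s(x i, x (i + 1)) ≠ c s(x (i + 1), x (i + 2))

/-- There is a good pair of edges between the two vertex-disjoint alternating
cycles `x` and `y`. -/
def HasGoodPair {V : Type*} (G : SimpleGraph V) (c : Sym2 V → Bool) {N M : ℕ}
    (x : ZMod N → V) (y : ZMod M → V) : Prop :=
  ∃ (s s' : ZMod N) (t t' : ZMod M),
    (s' = s - 1 ∨ s' = s + 1) ∧ (t' = t - 1 ∨ t' = t + 1) ∧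
    G.Adj (x s) (y t) ∧ G.Adj (x s') (y t') ∧
    c s(x s, x s') = c s(x s, y t) ∧
    c s(x s', y t') = c s(x s, y t) ∧
    c s(y t', y t) = c s(x s, y t)

/-- `G` is a colored generalized sum of the two vertex-disjoint alternating cycles
`C₁ = x` (of length `2n`) and `C₂ = y` (of length `2m`), regarded as 2-edge-colored
graphs: the `x`- and `y`-vertices cover `V(G)` and have disjoint ranges, the edges of
`G` inside each part are exactly the corresponding cycle edges, both cycles are
alternating, and between any two vertices of different parts there is exactly one
(arbitrarily colored) edge. -/
def IsCGSTwoCycles {V : Type*} (G : SimpleGraph V) (c : Sym2 V → Bool) {n m : ℕ}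
    (x : ZMod (2 * n) → V) (y : ZMod (2 * m) → V) : Prop :=
  IsAltCycle G c x ∧ IsAltCycle G c y ∧
  Disjoint (Set.range x) (Set.range y) ∧
  (∀ v : V, v ∈ Set.range x ∪ Set.range y) ∧
  (∀ i j : ZMod (2 * n), G.Adj (x i) (x j) ↔ (j = i + 1 ∨ j = i - 1)) ∧
  (∀ i j : ZMod (2 * m), G.Adj (y i) (y j) ↔ (j = i + 1 ∨ j = i - 1)) ∧
  (∀ (i : ZMod (2 * n)) (j : ZMod (2 * m)), G.Adj (x i) (y j))

/-- The set of exterior edges of a colored generalized sum of the two cycles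
`x` and `y`: the edges joining the two parts. -/
def extEdges {V : Type*} {N M : ℕ} (x : ZMod N → V) (y : ZMod M → V) : Set (Sym2 V) :=
  {e | ∃ i j, e = s(x i, y j)}

/-- One step of the construction of a parallel class: from the exterior edge
`x a - y b`, move to the neighbor of `x a` on `C₁` and the neighbor of `y b` on `C₂`
joined to them by the cycle-edge whose color equals `c s(x a, y b)`. -/
def pstep {V : Type*} (c : Sym2 V → Bool) {N M : ℕ} (x : ZMod N → V) (y : ZMod M → V) :
    ZMod N × ZMod M → ZMod N × ZMod M :=
  fun p =>
    (if c s(x p.1, x (p.1 + 1)) = c s(x p.1, y p.2) then p.1 + 1 else p.1 - 1,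
     if c s(y p.2, y (p.2 + 1)) = c s(x p.1, y p.2) then p.2 + 1 else p.2 - 1)

/-- The parallel class `P_{uv}` of the exterior edge `u v = x a - y b`:
the set of exterior edges obtained from it by iterating `pstep`,
`lcm (2n) (2m)` times. -/
def parallelClass {V : Type*} (c : Sym2 V → Bool) {N M : ℕ}
    (x : ZMod N → V) (y : ZMod M → V) (a : ZMod N) (b : ZMod M) : Set (Sym2 V) :=
  {e | ∃ i < Nat.lcm N M,
    e = s(x ((pstep c x y)^[i] (a, b)).1, y ((pstep c x y)^[i] (a, b)).2)}

/-- The number of red exterior edges incident with `v`. -/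
noncomputable def dred {V : Type*} (c : Sym2 V → Bool) {N M : ℕ}
    (x : ZMod N → V) (y : ZMod M → V) (v : V) : ℕ :=
  {e : Sym2 V | e ∈ extEdges x y ∧ v ∈ e ∧ c e = true}.ncard

/-- The number of blue exterior edges incident with `v`. -/
noncomputable def dblue {V : Type*} (c : Sym2 V → Bool) {N M : ℕ}
    (x : ZMod N → V) (y : ZMod M → V) (v : V) : ℕ :=
  {e : Sym2 V | e ∈ extEdges x y ∧ v ∈ e ∧ c e = false}.ncard

/-!
Encode the exterior edge `x i - y j` by the pair `(i, j)`. Without good pairs, consecutive exterior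
edges of a parallel class have different colors. The cycles alternate as well, so each coordinate
keeps moving in the direction it took first, and the `k`-th step from `p` leads to `p + k • d p` for
a fixed direction `d p`. Hence `lcm N M` steps lead back to `p`, parallel classes are the periodic
orbits of `pstep`, and two orbits that meet coincide.
-/

open Function

theorem iterate_eq_add_nsmul {A : Type*} [AddMonoid A] {f d : A → A} (hf : ∀ p, f p = p + d p)
    (hd : ∀ p, d (f p) = d p) (k : ℕ) (p : A) : f^[k] p = p + k • d p := by
  induction k generalizing p with
  | zero => simp
  | succ k ih => rw [iterate_succ_apply, ih, hd, hf, succ_nsmul', add_assoc]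

/-- The sign `±1` such that the edge of color `r` at `x i` leads to `x (i + cycleDir c x i r)`,
taken in `ZMod N` so that it can be added to indices. -/
def cycleDir {V : Type*} (c : Sym2 V → Bool) {N : ℕ} (x : ZMod N → V) (i : ZMod N) (r : Bool) :
    ZMod N :=
  if c s(x i, x (i + 1)) = r then 1 else -1

/-- The exterior edge `x i - y j` encoded by the pair of indices `(i, j)`. -/
def extEdge {V : Type*} {N M : ℕ} (x : ZMod N → V) (y : ZMod M → V) (p : ZMod N × ZMod M) :
    Sym2 V :=
  s(x p.1, y p.2)

/-- The displacement of `pstep` at the exterior edge encoded by `p`. -/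
def pstepDir {V : Type*} (c : Sym2 V → Bool) {N M : ℕ} (x : ZMod N → V) (y : ZMod M → V)
    (p : ZMod N × ZMod M) : ZMod N × ZMod M :=
  (cycleDir c x p.1 (c (extEdge x y p)), cycleDir c y p.2 (c (extEdge x y p)))

/-- The colors alternate along every parallel class, which is how the absence of good pairs enters
the argument. -/
def PStepAlternates {V : Type*} (c : Sym2 V → Bool) {N M : ℕ} (x : ZMod N → V)
    (y : ZMod M → V) : Prop :=
  ∀ p, c (extEdge x y (pstep c x y p)) = !c (extEdge x y p)

section

variable {V : Type*} {G : SimpleGraph V} {c : Sym2 V → Bool} {N M : ℕ}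
  {x : ZMod N → V} {y : ZMod M → V}

theorem add_cycleDir (c : Sym2 V → Bool) (x : ZMod N → V) (i : ZMod N) (r : Bool) :
    i + cycleDir c x i r = if c s(x i, x (i + 1)) = r then i + 1 else i - 1 := by
  rw [cycleDir, sub_eq_add_neg]
  split_ifs <;> rfl

theorem add_cycleDir_eq_sub_one_or_eq_add_one (c : Sym2 V → Bool) (x : ZMod N → V) (i : ZMod N)
    (r : Bool) : i + cycleDir c x i r = i - 1 ∨ i + cycleDir c x i r = i + 1 := by
  rw [add_cycleDir]
  exact (ite_eq_or_eq _ _ _).symm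

theorem pstep_eq_add_pstepDir (c : Sym2 V → Bool) (x : ZMod N → V) (y : ZMod M → V)
    (p : ZMod N × ZMod M) : pstep c x y p = p + pstepDir c x y p :=
  (Prod.ext (add_cycleDir c x _ _) (add_cycleDir c y _ _)).symm

namespace IsAltCycle

theorem color_succ (hx : IsAltCycle G c x) (i : ZMod N) :
    c s(x (i + 1), x (i + 1 + 1)) = !c s(x i, x (i + 1)) := by
  rw [Bool.eq_not, add_assoc, one_add_one_eq_two]
  exact (hx.2.2 i).symm

theorem color_pred (hx : IsAltCycle G c x) (i : ZMod N) :
    c s(x (i - 1), x i) = !c s(x i, x (i + 1)) := by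
  have h := hx.color_succ (i - 1)
  rw [sub_add_cancel] at h
  rw [h, Bool.not_not]

theorem color_add_cycleDir (hx : IsAltCycle G c x) (i : ZMod N) (r : Bool) :
    c s(x i, x (i + cycleDir c x i r)) = r := by
  rw [add_cycleDir]
  split_ifs with h
  · exact h
  · rw [Sym2.eq_swap, hx.color_pred, Bool.not_eq]
    exact h

theorem cycleDir_add_cycleDir_not (hx : IsAltCycle G c x) (i : ZMod N) (r : Bool) :
    cycleDir c x (i + cycleDir c x i r) (!r) = cycleDir c x i r := by
  by_cases h : c s(x i, x (i + 1)) = r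
  · simp [cycleDir, h, hx.color_succ]
  · simp [cycleDir, h, ← sub_eq_add_neg, hx.color_pred]

theorem pstepAlternates (hx : IsAltCycle G c x) (hy : IsAltCycle G c y)
    (hadj : ∀ i j, G.Adj (x i) (y j)) (hgp : ¬ HasGoodPair G c x y) : PStepAlternates c x y := by
  rintro ⟨i, j⟩
  rw [Bool.eq_not, pstep_eq_add_pstepDir]
  intro hcolor
  refine hgp ⟨i, _, j, _, add_cycleDir_eq_sub_one_or_eq_add_one c x i _,
    add_cycleDir_eq_sub_one_or_eq_add_one c y j _, hadj _ _, hadj _ _,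
    hx.color_add_cycleDir i _, hcolor, ?_⟩
  rw [Sym2.eq_swap]
  exact hy.color_add_cycleDir j _

theorem pstepDir_pstep (hx : IsAltCycle G c x) (hy : IsAltCycle G c y)
    (halt : PStepAlternates c x y) (p : ZMod N × ZMod M) :
    pstepDir c x y (pstep c x y p) = pstepDir c x y p := by
  rw [pstepDir, halt p, pstep_eq_add_pstepDir]
  exact Prod.ext (hx.cycleDir_add_cycleDir_not _ _) (hy.cycleDir_add_cycleDir_not _ _)

theorem isPeriodicPt_pstep (hx : IsAltCycle G c x) (hy : IsAltCycle G c y)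
    (halt : PStepAlternates c x y) (p : ZMod N × ZMod M) :
    IsPeriodicPt (pstep c x y) (N.lcm M) p := by
  have hclosed := iterate_eq_add_nsmul (pstep_eq_add_pstepDir c x y) (hx.pstepDir_pstep hy halt)
  rw [IsPeriodicPt, IsFixedPt, hclosed, nsmul_eq_mul, CharP.cast_eq_zero, zero_mul, add_zero]

end IsAltCycle

theorem extEdge_injective (hx : Injective x) (hy : Injective y) (hxy : ∀ i j, x i ≠ y j) :
    Injective (extEdge x y) := by
  rintro ⟨i, j⟩ ⟨i', j'⟩ h
  obtain ⟨hi, hj⟩ | ⟨hij, -⟩ := Sym2.eq_iff.1 h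
  · exact Prod.ext (hx hi) (hy hj)
  · exact absurd hij (hxy i j')

theorem range_extEdge (x : ZMod N → V) (y : ZMod M → V) :
    Set.range (extEdge x y) = extEdges x y := by
  ext e
  simp [extEdge, extEdges, eq_comm]

theorem parallelClass_subset_range_extEdge (c : Sym2 V → Bool) (x : ZMod N → V) (y : ZMod M → V)
    (a : ZMod N) (b : ZMod M) : parallelClass c x y a b ⊆ Set.range (extEdge x y) := by
  rintro e ⟨k, -, rfl⟩
  exact ⟨_, rfl⟩

theorem extEdge_mem_parallelClass [NeZero N] [NeZero M] (c : Sym2 V → Bool) (x : ZMod N → V)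
    (y : ZMod M → V) (a : ZMod N) (b : ZMod M) :
    extEdge x y (a, b) ∈ parallelClass c x y a b :=
  ⟨0, Nat.lcm_pos (NeZero.pos N) (NeZero.pos M), rfl⟩

theorem parallelClass_eq_image_periodicOrbit [NeZero N] [NeZero M] {a : ZMod N} {b : ZMod M}
    (hper : IsPeriodicPt (pstep c x y) (N.lcm M) (a, b)) :
    parallelClass c x y a b = extEdge x y '' {q | q ∈ periodicOrbit (pstep c x y) (a, b)} := by
  have hlcm : 0 < N.lcm M := Nat.lcm_pos (NeZero.pos N) (NeZero.pos M)
  have hmem := mk_mem_periodicPts hlcm hper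
  ext e
  constructor
  · rintro ⟨k, -, rfl⟩
    exact ⟨_, iterate_mem_periodicOrbit hmem k, rfl⟩
  · rintro ⟨q, hq, rfl⟩
    obtain ⟨k, rfl⟩ := (mem_periodicOrbit_iff hmem).1 hq
    refine ⟨k % N.lcm M, Nat.mod_lt k hlcm, ?_⟩
    rw [hper.iterate_mod_apply, extEdge]

theorem parallelClass_eq_of_extEdge_mem [NeZero N] [NeZero M]
    (hper : ∀ p, IsPeriodicPt (pstep c x y) (N.lcm M) p) (hinj : Injective (extEdge x y))
    {p : ZMod N × ZMod M} {a : ZMod N} {b : ZMod M}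
    (hp : extEdge x y p ∈ parallelClass c x y a b) :
    parallelClass c x y p.1 p.2 = parallelClass c x y a b := by
  have hmem := mk_mem_periodicPts (Nat.lcm_pos (NeZero.pos N) (NeZero.pos M)) (hper (a, b))
  rw [parallelClass_eq_image_periodicOrbit (hper _), hinj.mem_set_image, Set.mem_ofPred_eq,
    mem_periodicOrbit_iff hmem] at hp
  obtain ⟨k, rfl⟩ := hp
  rw [parallelClass_eq_image_periodicOrbit (hper _), parallelClass_eq_image_periodicOrbit (hper _),
    periodicOrbit_apply_iterate_eq hmem]

theorem parallel_classes_partition_general [NeZero N] [NeZero M] (hx : IsAltCycle G c x)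
    (hy : IsAltCycle G c y) (hadj : ∀ i j, G.Adj (x i) (y j)) (hgp : ¬ HasGoodPair G c x y) :
    (∀ a a' b b', (parallelClass c x y a b ∩ parallelClass c x y a' b').Nonempty →
        parallelClass c x y a b = parallelClass c x y a' b') ∧
    (∀ a b, (parallelClass c x y a b).Nonempty) ∧
    (∀ a b, parallelClass c x y a b ⊆ extEdges x y) ∧
    (⋃ (a) (b), parallelClass c x y a b) = extEdges x y := by
  have hper := hx.isPeriodicPt_pstep hy (hx.pstepAlternates hy hadj hgp)
  have hinj := extEdge_injective hx.1 hy.1 fun i j => (hadj i j).ne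
  have hsub := parallelClass_subset_range_extEdge c x y
  have hself := extEdge_mem_parallelClass c x y
  rw [← range_extEdge]
  refine ⟨?_, fun a b => ⟨_, hself a b⟩, hsub, ?_⟩
  · rintro a a' b b' ⟨e, he, he'⟩
    obtain ⟨p, rfl⟩ := hsub a b he
    exact (parallelClass_eq_of_extEdge_mem hper hinj he).symm.trans
      (parallelClass_eq_of_extEdge_mem hper hinj he')
  · refine (Set.iUnion₂_subset hsub).antisymm ?_
    rintro _ ⟨⟨a, b⟩, rfl⟩
    exact Set.mem_iUnion₂.2 ⟨a, b, hself a b⟩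

end

/-- If `G ∈ C₁ ⊕ C₂` with `C₁, C₂` vertex-disjoint alternating cycles of
lengths `2n` and `2m`, and `G` has no good pair, then any two parallel classes which
intersect are equal; consequently the parallel classes form a partition of the set of
exterior edges of `G`: every class is a nonempty subset of `E_⊕`, distinct classes are
disjoint, and their union is all of `E_⊕`. -/
theorem parallel_classes_partition {V : Type*} (G : SimpleGraph V) (c : Sym2 V → Bool)
    {n m : ℕ} (hn : 0 < n) (hm : 0 < m)
    (x : ZMod (2 * n) → V) (y : ZMod (2 * m) → V)
    (hG : IsCGSTwoCycles G c x y) (hgp : ¬ HasGoodPair G c x y) :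
    (∀ (a a' : ZMod (2 * n)) (b b' : ZMod (2 * m)),
      (parallelClass c x y a b ∩ parallelClass c x y a' b').Nonempty →
        parallelClass c x y a b = parallelClass c x y a' b') ∧
    (∀ (a : ZMod (2 * n)) (b : ZMod (2 * m)), (parallelClass c x y a b).Nonempty) ∧
    (∀ (a : ZMod (2 * n)) (b : ZMod (2 * m)), parallelClass c x y a b ⊆ extEdges x y) ∧
    (⋃ (a : ZMod (2 * n)) (b : ZMod (2 * m)), parallelClass c x y a b) = extEdges x y := by
  obtain ⟨hx, hy, -, -, -, -, hadj⟩ := hG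
  have : NeZero (2 * n) := ⟨by lia⟩
  have : NeZero (2 * m) := ⟨by lia⟩
  exact parallel_classes_partition_general hx hy hadj hgp
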